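/- arXiv:2112.07715 — 3 statements merged into one kernel-verified Lean document; each statement's English description precedes it below -/
import Mathlib

section
/- Let C be an integral ℤ-lattice and f ∈ O(C) an isometry of prime order p with characteristic polynomial Φ₁^{e₁}Φ_p^{e_p}. Set A = ker Φ₁(f), B = ker Φ_p(f), and m = min{e₁, e_p, ℓ(D_A), ℓ(D_B)} where ℓ(D) denotes the minimal number of generators of the discriminant group D = N^∨/N. Then pC ⊆ A ⊥ B and the index [C : A ⊥ B] divides p^m. -/
open Polynomial

attribute [instance 2000] Submodule.module

/-- The minimal number of generators `ℓ(D)` of a `ℤ`-module `D`. -/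
noncomputable def minGenerators (D : Type*) [AddCommGroup D] [Module ℤ D] : ℕ :=
  sInf {n : ℕ | ∃ s : Finset D, s.card = n ∧ Submodule.span ℤ (s : Set D) = ⊤}

/-- The discriminant group `D_A = A^∨/A` of a sublattice `A` of an integral lattice
`(C, b)`: since the restricted form is nondegenerate, it is the cokernel of the natural map
`A → Hom(A, ℤ)` induced by `b`. -/
abbrev discGroup {C : Type*} [AddCommGroup C] [Module ℤ C]
    (b : C →ₗ[ℤ] C →ₗ[ℤ] ℤ) (A : Submodule ℤ C) : Type _ :=
  (↥A →ₗ[ℤ] ℤ) ⧸ LinearMap.range (b.domRestrict₁₂ A A)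

theorem glue_card_dvd_det {M H : Type*} [AddCommGroup M] [Module ℤ M] [Module.Free ℤ M]
    [Module.Finite ℤ M] [AddCommGroup H] [Module ℤ H] (g : M →ₗ[ℤ] H)
    (hg : Function.Surjective g) (h : M →ₗ[ℤ] M) (hinj : Function.Injective h)
    (hgh : ∀ x, g (h x) = 0) : Nat.card H ∣ (LinearMap.det h).natAbs := by
  rename_i iM _ _ _ iH
  obtain rfl : iM = AddCommGroup.toIntModule M := Subsingleton.elim _ _
  obtain rfl : iH = AddCommGroup.toIntModule H := Subsingleton.elim _ _
  have key := Submodule.natAbs_det_equiv (LinearMap.range h) (LinearEquiv.ofInjective h hinj)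
  have e1 : (LinearMap.range h).subtype ∘ₗ
      AddMonoidHom.toIntLinearMap ((LinearEquiv.ofInjective h hinj : M ≃ₗ[ℤ] _) : M →+ _) = h := by
    ext x; rfl
  erw [e1] at key
  rw [key]
  let q : (M ⧸ LinearMap.range h) →ₗ[ℤ] H := (LinearMap.range h).liftQ g (by
    rintro _ ⟨x, rfl⟩; exact hgh x)
  have hq : Function.Surjective q := by
    intro y
    obtain ⟨x, rfl⟩ := hg y
    exact ⟨Submodule.Quotient.mk x, rfl⟩
  exact AddSubgroup.card_dvd_of_surjective q.toAddMonoidHom hq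

theorem glue_det_lsmul {R M : Type*} [CommRing R] [AddCommGroup M] [Module R M]
    [Module.Free R M] (c : R) : LinearMap.det (LinearMap.lsmul R M c) = c ^ Module.finrank R M := by
  have : LinearMap.lsmul R M c = c • LinearMap.id := by ext; simp
  rw [this, LinearMap.det_smul]
  simp

theorem glue_map_lsmul {R M H : Type*} [CommRing R] [AddCommGroup M] [Module R M]
    [AddCommGroup H] [Module R H] (g : M →ₗ[R] H) (n : ℕ) (x : M) :
    g (LinearMap.lsmul R M (n : R) x) = n • g x := by
  rw [LinearMap.lsmul_apply, map_smul, Nat.cast_smul_eq_nsmul]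

theorem glue_eval_one {R M : Type*} [CommRing R] [AddCommGroup M] [Module R M]
    [Module.Free R M] [Module.Finite R M] (g : M →ₗ[R] M) :
    g.charpoly.eval 1 = LinearMap.det (LinearMap.id - g) := by
  rw [LinearMap.eval_charpoly, map_one]
  rfl

theorem glue_free_quot {R M N : Type*} [CommRing R] [IsDomain R] [IsPrincipalIdealRing R]
    [AddCommGroup M] [Module R M] [AddCommGroup N] [Module R N]
    [Module.Free R N] [Module.Finite R N] (g : M →ₗ[R] N) :
    Module.Free R (M ⧸ LinearMap.ker g) :=
  Module.Free.of_equiv g.quotKerEquivRange.symm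

theorem glue_finrank_quot {R M N : Type*} [CommRing R] [IsDomain R] [IsPrincipalIdealRing R]
    [AddCommGroup M] [Module R M] [AddCommGroup N] [Module R N]
    [Module.Free R N] [Module.Finite R N] (g : M →ₗ[R] N) (A : Submodule R N)
    (h : ∀ x, g x ∈ A) :
    Module.finrank R (M ⧸ LinearMap.ker g) ≤ Module.finrank R A := by
  rw [g.quotKerEquivRange.finrank_eq]
  exact Submodule.finrank_mono (by rintro _ ⟨x, rfl⟩; exact h x)

theorem glue_poly_aux {R : Type*} [CommRing R] [IsDomain R] (P Q : R[X]) (a e : ℕ)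
    (h : (X - 1) ^ a * P = (X - 1) ^ e * Q) (hP : P.eval 1 ≠ 0) (hae : a ≤ e) :
    a = e ∧ P = Q := by
  obtain ⟨k, rfl⟩ := Nat.exists_eq_add_of_le hae
  have hX : (X - 1 : R[X]) ≠ 0 := by simpa using X_sub_C_ne_zero (1 : R)
  rw [pow_add, mul_assoc] at h
  have h2 := mul_left_cancel₀ (pow_ne_zero a hX) h
  have hk : k = 0 := by
    by_contra hk
    apply hP
    rw [h2]
    simp [hk]
  subst hk
  simpa using h2

theorem glue_poly {R : Type*} [CommRing R] [IsDomain R] (P Q : R[X]) (a e : ℕ)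
    (h : (X - 1) ^ a * P = (X - 1) ^ e * Q) (hP : P.eval 1 ≠ 0) (hQ : Q.eval 1 ≠ 0) :
    a = e ∧ P = Q := by
  rcases le_total a e with hae | hae
  · exact glue_poly_aux P Q a e h hP hae
  · obtain ⟨h1, h2⟩ := glue_poly_aux Q P e a h.symm hQ hae
    exact ⟨h1.symm, h2.symm⟩

section

attribute [local instance 2000] Submodule.Quotient.module

theorem glue_card_dvd_pow {M H : Type*} [AddCommGroup M] [Module ℤ M] [Module.Free ℤ M]
    [Module.Finite ℤ M] [AddCommGroup H] [Module ℤ H] (g : M →ₗ[ℤ] H)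
    (hg : Function.Surjective g) (p : ℕ) (hp : p ≠ 0)
    (hH : ∀ x : H, p • x = 0) : Nat.card H ∣ p ^ Module.finrank ℤ M := by
  have hp' : (p : ℤ) ≠ 0 := by exact_mod_cast hp
  have := glue_card_dvd_det g hg (LinearMap.lsmul ℤ M (p : ℤ))
    (LinearMap.lsmul_injective hp')
    (by intro x; rw [glue_map_lsmul, hH])
  rw [glue_det_lsmul] at this
  simpa [Int.natAbs_pow] using this

theorem glue_card_dvd_gen {D H : Type*} [AddCommGroup D] [Module ℤ D] [Module.Finite ℤ D]
    [AddCommGroup H] [Module ℤ H] (φ : H →ₗ[ℤ] D)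
    (hφ : Function.Injective φ) (p : ℕ) (hp : p ≠ 0)
    (hH : ∀ x : H, p • x = 0) : Nat.card H ∣ p ^ minGenerators D := by
  have hne : {n : ℕ | ∃ s : Finset D, s.card = n ∧ Submodule.span ℤ (s : Set D) = ⊤}.Nonempty := by
    obtain ⟨s, hs⟩ := (Module.Finite.fg_top : (⊤ : Submodule ℤ D).FG)
    exact ⟨_, s, rfl, hs⟩
  obtain ⟨s, hs, hspan⟩ := Nat.sInf_mem hne
  change s.card = minGenerators D at hs
  rw [← hs]
  let g : (s → ℤ) →ₗ[ℤ] D := Fintype.linearCombination ℤ (fun i : s => (i : D))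
  have hg : Function.Surjective g := by
    rw [← LinearMap.range_eq_top, Fintype.range_linearCombination]
    simpa using hspan
  let K : Submodule ℤ (s → ℤ) := (LinearMap.range φ).comap g
  let e := LinearEquiv.ofInjective φ hφ
  let ψ : K →ₗ[ℤ] H := e.symm.toLinearMap ∘ₗ (g.restrict (p := K) (q := LinearMap.range φ)
    (fun x hx => hx))
  have hψ : Function.Surjective ψ := by
    intro y
    obtain ⟨x, hx⟩ := hg (φ y)
    refine ⟨⟨x, ⟨y, hx.symm⟩⟩, ?_⟩
    change e.symm _ = y
    rw [LinearEquiv.symm_apply_eq]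
    apply Subtype.ext
    exact hx
  refine (glue_card_dvd_pow ψ hψ p hp hH).trans (pow_dvd_pow _ ?_)
  refine (Submodule.finrank_le K).trans ?_
  simp

theorem glue_card_dvd_disc {C : Type*} [AddCommGroup C] [Module ℤ C] [Module.Free ℤ C]
    [Module.Finite ℤ C] (b : C →ₗ[ℤ] C →ₗ[ℤ] ℤ) (N M : Submodule ℤ C)
    (hperp : ∀ x ∈ M, ∀ y ∈ N, b x y = 0)
    (hperp' : ∀ x, (∀ y ∈ N, b x y = 0) → x ∈ M)
    (p : ℕ) (hp : p ≠ 0) (hpC : ∀ x : C, p • x ∈ N ⊔ M) :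
    Nat.card (C ⧸ (N ⊔ M)) ∣ p ^ minGenerators (discGroup b N) := by
  let φ₀ : C →ₗ[ℤ] discGroup b N :=
    (LinearMap.range (b.domRestrict₁₂ N N)).mkQ ∘ₗ (LinearMap.lcomp ℤ ℤ N.subtype) ∘ₗ b
  have hker : LinearMap.ker φ₀ = N ⊔ M := by
    apply le_antisymm
    · intro x hx
      have hx' : (LinearMap.lcomp ℤ ℤ N.subtype) (b x) ∈ LinearMap.range (b.domRestrict₁₂ N N) := by
        rw [← Submodule.Quotient.mk_eq_zero]; exact hx
      obtain ⟨a, ha⟩ := hx'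
      have : x - a ∈ M := by
        apply hperp'
        intro y hy
        have := LinearMap.congr_fun ha ⟨y, hy⟩
        change b a y = b x y at this
        simp [this]
      have h2 := Submodule.add_mem_sup a.2 this
      simpa using h2
    · rw [sup_le_iff]
      constructor
      · intro x hx
        refine (Submodule.Quotient.mk_eq_zero _).2 ⟨⟨x, hx⟩, ?_⟩
        ext y; rfl
      · intro x hx
        refine (Submodule.Quotient.mk_eq_zero _).2 ?_
        convert Submodule.zero_mem _
        ext y
        exact hperp x hx y y.2
  refine glue_card_dvd_gen ((N ⊔ M).liftQ φ₀ hker.ge) ?_ p hp ?_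
  · rw [← LinearMap.ker_eq_bot]
    exact Submodule.ker_liftQ_eq_bot _ _ _ hker.le
  · intro x
    obtain ⟨x, rfl⟩ := Submodule.Quotient.mk_surjective _ x
    rw [← Submodule.mkQ_apply, ← map_nsmul, Submodule.mkQ_apply, Submodule.Quotient.mk_eq_zero]
    exact hpC x

theorem glue_charpoly {R C : Type*} [CommRing R] [IsDomain R] [Infinite R] [AddCommGroup C] [Module R C] [Module.Free R C]
    [Module.Finite R C] (f : Module.End R C) (A : Submodule R C) [Module.Free R A] [Module.Finite R A]
    [Module.Free R (C ⧸ A)]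
    (hA : ∀ x ∈ A, f x = x) (he : A ≤ A.comap f) :
    f.charpoly = (X - 1) ^ Module.finrank R A * (A.mapQ A f he).charpoly := by
  apply Polynomial.funext
  intro t
  rw [eval_mul, LinearMap.eval_charpoly, LinearMap.eval_charpoly]
  have he' : A ≤ A.comap (algebraMap R (Module.End R C) t - f) := by
    intro x hx
    exact A.sub_mem (A.smul_mem t hx) (he hx)
  rw [LinearMap.det_eq_det_mul_det A _ he']
  have h1 : (algebraMap R (Module.End R C) t - f).restrict he' = (t - 1) • LinearMap.id := by
    ext x
    simp [LinearMap.restrict_apply, hA x.1 x.2, sub_smul]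
  have h2 : A.mapQ A (algebraMap R (Module.End R C) t - f) he' =
      algebraMap R (Module.End R (C ⧸ A)) t - A.mapQ A f he := by
    ext x
    simp
  rw [h1, h2, LinearMap.det_smul]
  simp

theorem glue_core (p : ℕ) (hp : p.Prime)
    (C : Type*) [AddCommGroup C] [Module ℤ C] [Module.Free ℤ C] [Module.Finite ℤ C]
    (b : C →ₗ[ℤ] C →ₗ[ℤ] ℤ)
    (hsymm : ∀ x y, b x y = b y x)
    (hnondeg : ∀ x, (∀ y, b x y = 0) → x = 0)
    (f : Module.End ℤ C)
    (hisom : ∀ x y, b (f x) (f y) = b x y)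
    (hfp : f ^ p = 1)
    (e₁ eₚ : ℕ)
    (hchar : LinearMap.charpoly f = (X - 1) ^ e₁ * cyclotomic p ℤ ^ eₚ)
    (A B : Submodule ℤ C)
    (hA : A = LinearMap.ker (f - 1))
    (hB : B = LinearMap.ker (∑ i ∈ Finset.range p, f ^ i)) :
    (∀ x : C, p • x ∈ A ⊔ B) ∧ Nat.card (C ⧸ (A ⊔ B)) ∣ p ^ e₁ ∧
    Nat.card (C ⧸ (A ⊔ B)) ∣ p ^ eₚ ∧
    Nat.card (C ⧸ (A ⊔ B)) ∣ p ^ minGenerators (discGroup b A) ∧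
    Nat.card (C ⧸ (A ⊔ B)) ∣ p ^ minGenerators (discGroup b B) := by
  have hp0 : p ≠ 0 := hp.ne_zero
  set Φ : Module.End ℤ C := ∑ i ∈ Finset.range p, f ^ i with hΦ
  have hΦx : ∀ x, Φ x = ∑ i ∈ Finset.range p, (f ^ i) x := by
    intro x; rw [hΦ, LinearMap.sum_apply]
  have hmA : ∀ x, x ∈ A ↔ f x = x := by
    intro x
    rw [hA, LinearMap.mem_ker, LinearMap.sub_apply, Module.End.one_apply, sub_eq_zero]
  have hmB : ∀ x, x ∈ B ↔ Φ x = 0 := by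
    intro x; rw [hB, LinearMap.mem_ker]
  have torsC : ∀ x : C, p • x = 0 → x = 0 := by
    intro x hx
    have : Module.IsTorsionFree ℤ C := inferInstance
    rw [← Nat.cast_smul_eq_nsmul ℤ] at hx
    have h3 : Function.Injective (LinearMap.lsmul ℤ C (p : ℤ)) :=
      LinearMap.lsmul_injective (by exact_mod_cast hp0)
    apply h3
    rw [map_zero]
    exact hx
  have hΦA : ∀ x, Φ x ∈ A := by
    intro x
    have h : (f - 1) * Φ = 0 := by rw [hΦ, mul_geom_sum, hfp, sub_self]
    rw [hA]
    exact LinearMap.congr_fun h x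
  have hfB : ∀ x, f x - x ∈ B := by
    intro x
    have h : Φ * (f - 1) = 0 := by rw [hΦ, geom_sum_mul, hfp, sub_self]
    rw [hB]
    exact LinearMap.congr_fun h x
  have hpowA : ∀ a ∈ A, ∀ i : ℕ, (f ^ i) a = a := by
    intro a ha i
    induction i with
    | zero => rfl
    | succ k ih => rw [pow_succ, Module.End.mul_apply, (hmA a).1 ha, ih]
  have hΦa : ∀ a ∈ A, Φ a = p • a := by
    intro a ha
    rw [hΦx, Finset.sum_congr rfl (fun i _ => hpowA a ha i)]
    simp
  have hdec : ∀ x, p • x - Φ x ∈ B := by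
    intro x
    rw [hmB, map_sub, map_nsmul, hΦa _ (hΦA x), sub_self]
  have hpC : ∀ x : C, p • x ∈ A ⊔ B := by
    intro x
    have := Submodule.add_mem_sup (hΦA x) (hdec x)
    simpa using this
  have hAB : ∀ x, x ∈ A → x ∈ B → x = 0 := by
    intro x hxA hxB
    apply torsC
    rw [← hΦa x hxA, (hmB x).1 hxB]
  have hbpow : ∀ i : ℕ, ∀ x y, b ((f ^ i) x) ((f ^ i) y) = b x y := by
    intro i
    induction i with
    | zero => intro x y; rfl
    | succ k ih =>
      intro x y
      rw [pow_succ, Module.End.mul_apply, Module.End.mul_apply, ih, hisom]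
  have hbΦ : ∀ a ∈ A, ∀ c, b a (Φ c) = p • b a c := by
    intro a ha c
    have h1 : ∀ i ∈ Finset.range p, b a ((f ^ i) c) = b a c := by
      intro i _
      have := hbpow i a c
      rwa [hpowA a ha i] at this
    rw [hΦx, map_sum, Finset.sum_congr rfl h1]
    simp
  have perp : ∀ x ∈ A, ∀ y ∈ B, b x y = 0 := by
    intro x hx y hy
    have := hbΦ x hx y
    rw [(hmB y).1 hy, map_zero] at this
    simpa [hp0] using this.symm
  have perp' : ∀ x ∈ B, ∀ y ∈ A, b x y = 0 := by
    intro x hx y hy; rw [hsymm]; exact perp y hy x hx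
  have hnd : ∀ x, (∀ y ∈ A, b x y = 0) → (∀ y ∈ B, b x y = 0) → x = 0 := by
    intro x h1 h2
    apply hnondeg
    intro y
    have h3 : b x (Φ y + (p • y - Φ y)) = 0 := by
      rw [map_add, h1 _ (hΦA y), h2 _ (hdec y), add_zero]
    rw [add_sub_cancel, map_nsmul] at h3
    simpa [hp0] using h3
  have hAperp : ∀ x, (∀ y ∈ A, b x y = 0) → x ∈ B := by
    intro x hx
    rw [hmB]
    apply hnd
    · intro y hy
      rw [hsymm, hbΦ y hy, hsymm, hx y hy, smul_zero]
    · exact perp _ (hΦA x)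
  have hfpB : ∀ z ∈ B, ∀ i : ℕ, (f ^ i) z ∈ B := by
    intro z hz i
    rw [hmB]
    have hc : Commute Φ (f ^ i) := by
      rw [hΦ]
      exact Commute.sum_left _ _ _ (fun j _ => (Commute.refl f).pow_pow j i)
    have := LinearMap.congr_fun hc.eq z
    rw [Module.End.mul_apply, Module.End.mul_apply, (hmB z).1 hz, map_zero] at this
    exact this
  have hBperp : ∀ x, (∀ y ∈ B, b x y = 0) → x ∈ A := by
    intro x hx
    rw [hmA, ← sub_eq_zero]
    apply hnd
    · exact perp' _ (hfB x)
    · intro z hz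
      have h1 : f ((f ^ (p - 1)) z) = z := by
        rw [← Module.End.mul_apply, ← pow_succ', Nat.sub_add_cancel hp.one_le, hfp]
        rfl
      have h2 : b (f x) z = 0 := by
        rw [← h1, hisom]
        exact hx _ (hfpB z hz _)
      rw [map_sub, LinearMap.sub_apply, h2, hx z hz, sub_zero]
  have hH : ∀ x : C ⧸ (A ⊔ B), p • x = 0 := by
    intro x
    obtain ⟨x, rfl⟩ := Submodule.Quotient.mk_surjective _ x
    rw [← Submodule.mkQ_apply, ← map_nsmul, Submodule.mkQ_apply, Submodule.Quotient.mk_eq_zero]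
    exact hpC x
  have freeA : Module.Free ℤ (C ⧸ A) := by rw [hA]; exact glue_free_quot _
  have freeB : Module.Free ℤ (C ⧸ B) := by rw [hB]; exact glue_free_quot _
  have he : A ≤ A.comap f := by
    intro x hx
    rw [Submodule.mem_comap, (hmA x).1 hx]; exact hx
  have hch := glue_charpoly f A (fun x hx => (hmA x).1 hx) he
  have hinj : Function.Injective
      ((LinearMap.id - A.mapQ A f he : (C ⧸ A) →ₗ[ℤ] (C ⧸ A))) := by
    rw [← LinearMap.ker_eq_bot, LinearMap.ker_eq_bot']
    intro y hy
    obtain ⟨x, rfl⟩ := Submodule.Quotient.mk_surjective _ y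
    rw [LinearMap.sub_apply, LinearMap.id_apply, Submodule.mapQ_apply,
      ← Submodule.Quotient.mk_sub, Submodule.Quotient.mk_eq_zero] at hy
    have h1 : f x - x ∈ A := by
      have := A.neg_mem hy
      rwa [neg_sub] at this
    rw [Submodule.Quotient.mk_eq_zero, hmA, ← sub_eq_zero]
    exact hAB _ h1 (hfB x)
  have hdet : LinearMap.det (LinearMap.id - A.mapQ A f he) ≠ 0 := by
    intro h
    exact LinearMap.det_eq_zero_iff_ker_ne_bot.1 h (LinearMap.ker_eq_bot.2 hinj)
  have : Fact p.Prime := ⟨hp⟩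
  have hcyc : (cyclotomic p ℤ ^ eₚ).eval 1 = (p : ℤ) ^ eₚ := by
    rw [eval_pow, eval_one_cyclotomic_prime]
  obtain ⟨hr, hpoly⟩ := glue_poly _ _ _ _ (hch.symm.trans hchar)
    (by rwa [glue_eval_one]) (by rw [hcyc]; exact pow_ne_zero _ (by exact_mod_cast hp0))
  refine ⟨hpC, ?_, ?_, ?_, ?_⟩
  · have h1 := glue_card_dvd_pow (Submodule.factor (le_sup_right : B ≤ A ⊔ B))
      (Submodule.factor_surjective _) p hp0 hH
    refine h1.trans (pow_dvd_pow _ ?_)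
    rw [← hr, hB]
    exact glue_finrank_quot Φ A hΦA
  · have h1 := glue_card_dvd_det (M := C ⧸ A) (Submodule.factor (le_sup_left : A ≤ A ⊔ B))
      (Submodule.factor_surjective _) _ hinj (by
        intro y
        obtain ⟨x, rfl⟩ := Submodule.Quotient.mk_surjective _ y
        rw [LinearMap.sub_apply, LinearMap.id_apply, Submodule.mapQ_apply,
          ← Submodule.Quotient.mk_sub]
        change (Submodule.Quotient.mk (x - f x) : C ⧸ (A ⊔ B)) = 0
        rw [Submodule.Quotient.mk_eq_zero]
        have := (A ⊔ B).neg_mem (Submodule.mem_sup_right (hfB x))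
        rwa [neg_sub] at this)
    rw [← glue_eval_one, hpoly, hcyc] at h1
    simpa [Int.natAbs_pow] using h1
  · exact glue_card_dvd_disc b A B perp' hAperp p hp0 hpC
  · have h1 := glue_card_dvd_disc b B A perp hBperp p hp0 (by rwa [sup_comm])
    rwa [sup_comm] at h1

end

/-- Let `C` be an integral `ℤ`-lattice and `f ∈ O(C)` an isometry of prime order `p` with
characteristic polynomial `Φ₁^{e₁} Φ_p^{e_p}`.  With `A = ker Φ₁(f)`, `B = ker Φ_p(f)` and
`m = min{e₁, e_p, ℓ(D_A), ℓ(D_B)}`, one has `pC ⊆ A ⊥ B` and `[C : A ⊥ B] ∣ p^m`. -/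
theorem glue_index_divides
    (p : ℕ) (hp : p.Prime)
    (C : Type*) [AddCommGroup C] [Module ℤ C] [Module.Free ℤ C] [Module.Finite ℤ C]
    (b : C →ₗ[ℤ] C →ₗ[ℤ] ℤ)
    (hsymm : ∀ x y, b x y = b y x)
    (hnondeg : ∀ x, (∀ y, b x y = 0) → x = 0)
    (f : Module.End ℤ C)
    (hisom : ∀ x y, b (f x) (f y) = b x y)
    (hord : orderOf f = p)
    (e₁ eₚ : ℕ)
    (hchar : LinearMap.charpoly f = cyclotomic 1 ℤ ^ e₁ * cyclotomic p ℤ ^ eₚ)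
    (A B : Submodule ℤ C)
    (hA : A = LinearMap.ker (aeval f (cyclotomic 1 ℤ)))
    (hB : B = LinearMap.ker (aeval f (cyclotomic p ℤ))) :
    (∀ x : C, (p : ℤ) • x ∈ A ⊔ B) ∧
      Nat.card (C ⧸ (A ⊔ B)) ∣
        p ^ min (min e₁ eₚ)
            (min (minGenerators (discGroup b A)) (minGenerators (discGroup b B))) := by

  obtain ⟨h0, h1, h2, h3, h4⟩ := glue_core p hp C b hsymm hnondeg f hisom
    (by rw [← hord]; exact pow_orderOf_eq_one f) e₁ eₚ (by rw [hchar, cyclotomic_one]) A B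
    (by rw [hA, cyclotomic_one]; congr 1; simp)
    (by
      have : Fact p.Prime := ⟨hp⟩
      rw [hB, cyclotomic_prime]; congr 1; simp)
  refine ⟨fun x => ?_, ?_⟩
  · have := h0 x
    simpa using this
  · rcases min_choice (min e₁ eₚ)
      (min (minGenerators (discGroup b A)) (minGenerators (discGroup b B))) with h | h <;> rw [h]
    · rcases min_choice e₁ eₚ with h | h <;> rw [h] <;> assumption
    · rcases min_choice (minGenerators (discGroup b A)) (minGenerators (discGroup b B))
        with h | h <;> rw [h]
      · convert h3
      · convert h4
end

section
/- Let K be a non-archimedean local field of characteristic 0 that is dyadic (residue characteristic 2), E/K a ramified quadratic field extension with maximal orders 𝔬 ⊆ K and 𝒪 ⊆ E, and let B ⊆ 𝔬 be an additive subgroup (ℤ-submodule) such that Tr^E_K(𝒪) ⊆ B, 1 ∈ B, and Nr^E_K(𝒪)·B ⊆ B. Then 𝔬 ⊆ B. -/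
lemma aux_unif (R S K E : Type*) [CommRing R] [CommRing S] [Field K] [Field E]
    [IsDedekindDomain R] [IsDedekindDomain S] [IsPrincipalIdealRing S]
    [Algebra R K] [IsFractionRing R K] [Algebra S E] [Algebra K E] [Algebra R E] [Algebra R S]
    [IsScalarTower R S E] [IsScalarTower R K E] [IsIntegralClosure S R E] [FiniteDimensional K E]
    [CharZero K] [Module.Finite R S] [Module.IsTorsionFree R S]
    (P : Ideal S) [P.IsMaximal]
    (hsurj : ∀ x : S, ∃ a : R, x - algebraMap R S a ∈ P) :
    ∃ (w : S) (n : R), algebraMap R K n = Algebra.norm K (algebraMap S E w) ∧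
      P.under R = Ideal.span {n} := by
  obtain ⟨w, hw⟩ := (IsPrincipalIdealRing.principal P).principal
  have hw : P = Ideal.span {w} := hw
  refine ⟨w, Algebra.intNorm R S w, Algebra.algebraMap_intNorm (K := K) (L := E) w, ?_⟩
  have : CharZero (FractionRing R) :=
    charZero_of_injective_ringHom (FractionRing.algEquiv R K).symm.toRingEquiv.injective
  have : (P.under R).IsMaximal := inferInstance
  have h := Ideal.relNorm_eq_pow_of_isMaximal P (P.under R)
  have h1 : P.inertiaDeg R = 1 := by
    rw [Ideal.inertiaDeg_eq_of_isMaximal (P.under R) P]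
    let : Field (R ⧸ P.under R) := Ideal.Quotient.field _
    have : Nontrivial (S ⧸ P) := Ideal.Quotient.nontrivial_iff.2 (Ideal.IsMaximal.ne_top ‹_›)
    refine finrank_eq_one (1 : S ⧸ P) one_ne_zero fun y => ?_
    obtain ⟨x, rfl⟩ := Ideal.Quotient.mk_surjective y
    obtain ⟨a, ha⟩ := hsurj x
    refine ⟨Ideal.Quotient.mk _ a, ?_⟩
    rw [Algebra.smul_def, mul_one]
    exact (Ideal.Quotient.eq.2 ha).symm
  rw [h1, pow_one, hw, Ideal.relNorm_singleton, ← hw] at h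
  exact h.symm

lemma aux_fin (A S : Type*) [CommRing A] [IsLocalRing A] [CommRing S] [IsDedekindDomain S]
    [Algebra A S] [Module.Finite A S] : IsPrincipalIdealRing S := by
  refine IsPrincipalIdealRing.of_finite_maximals ?_
  refine (Algebra.QuasiFinite.finite_primesOver (IsLocalRing.maximalIdeal A)).subset ?_
  intro P hP
  have : P.IsMaximal := hP
  refine ⟨hP.isPrime, ⟨(IsLocalRing.eq_maximalIdeal ?_).symm⟩⟩
  infer_instance

lemma aux_pow (K : Type*) [Field K] [Algebra ℚ_[2] K] [FiniteDimensional ℚ_[2] K]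
    [Algebra ℤ_[2] K] [IsScalarTower ℤ_[2] ℚ_[2] K] (x : K)
    (hx : x ∈ integralClosure ℤ_[2] K) (hx' : x⁻¹ ∉ integralClosure ℤ_[2] K) :
    ∃ (j : ℕ), ∃ y ∈ integralClosure ℤ_[2] K, x ^ j = 2 * y := by
  let f := spectralMulAlgNorm ℚ_[2] K
  have key : ∀ z : K, z ∈ integralClosure ℤ_[2] K ↔ f z ≤ 1 := by
    intro z
    have hz : IsIntegral ℚ_[2] z := Algebra.IsIntegral.isIntegral z
    change IsIntegral _ _ ↔ spectralValue (minpoly ℚ_[2] z) ≤ 1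
    rw [spectralValue_le_one_iff (minpoly.monic hz)]
    constructor
    · intro h n
      rw [minpoly.isIntegrallyClosed_eq_field_fractions' ℚ_[2] h, Polynomial.coeff_map]
      exact PadicInt.norm_le_one _
    · intro h
      have hl : minpoly ℚ_[2] z ∈ Polynomial.lifts (algebraMap ℤ_[2] ℚ_[2]) := by
        rw [Polynomial.lifts_iff_coeff_lifts]
        intro n
        exact ⟨⟨_, h n⟩, rfl⟩
      obtain ⟨q, hq, -, hm⟩ := Polynomial.lifts_and_degree_eq_and_monic hl (minpoly.monic hz)
      refine ⟨q, hm, ?_⟩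
      rw [← Polynomial.aeval_def, ← Polynomial.aeval_map_algebraMap ℚ_[2], hq, minpoly.aeval]
  rw [key] at hx hx'
  have h0 : x ≠ 0 := by
    rintro rfl
    simp at hx'
  have hlt : f x < 1 := by
    rw [map_inv₀, not_le] at hx'
    exact (one_lt_inv_iff₀.1 hx').2
  have : CharZero K := charZero_of_injective_algebraMap (algebraMap ℚ_[2] K).injective
  have h2 : 0 < f 2 := by
    refine lt_of_le_of_ne (apply_nonneg f _) (Ne.symm ?_)
    rw [Ne, map_eq_zero_iff_eq_zero]
    exact two_ne_zero
  obtain ⟨j, hj⟩ := exists_pow_lt_of_lt_one h2 hlt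
  refine ⟨j, x ^ j / 2, ?_, by field_simp⟩
  rw [key, map_div₀, map_pow]
  exact (div_le_one h2).2 hj.le

lemma aux_sq (R : Type*) [CommRing R] [Algebra ℤ_[2] R] [Module.Finite ℤ_[2] R]
    (p : Ideal R) [p.IsMaximal] (x : R) : ∃ a : R, x - a ^ 2 ∈ p := by
  have hp : p.under ℤ_[2] = IsLocalRing.maximalIdeal ℤ_[2] :=
    IsLocalRing.eq_maximalIdeal inferInstance
  have : Finite (ℤ_[2] ⧸ p.under ℤ_[2]) := by
    rw [hp]
    exact Finite.of_equiv _ (PadicInt.residueField (p := 2)).symm.toEquiv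
  let : Field (R ⧸ p) := Ideal.Quotient.field p
  have : Finite (R ⧸ p) := Module.finite_of_finite (ℤ_[2] ⧸ p.under ℤ_[2])
  have : CharP (R ⧸ p) 2 := by
    refine CharTwo.of_one_ne_zero_of_two_eq_zero one_ne_zero ?_
    have h : (2 : ℤ_[2]) ∈ p.under ℤ_[2] := by
      rw [hp]
      exact PadicInt.p_nonunit
    have h' := Ideal.mem_comap.1 h
    rw [map_ofNat] at h'
    have := Ideal.Quotient.eq_zero_iff_mem.2 h'
    rwa [map_ofNat] at this
  obtain ⟨y, hy⟩ := FiniteField.isSquare_of_char_two (ringChar.eq (R ⧸ p) 2) (Ideal.Quotient.mk p x)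
  obtain ⟨a, rfl⟩ := Ideal.Quotient.mk_surjective y
  refine ⟨a, Ideal.Quotient.eq.1 ?_⟩
  rw [hy, map_pow, sq]

/-- Let `K` be a dyadic non-archimedean local field of characteristic `0` (a finite
extension of `ℚ₂`), `E/K` a ramified quadratic field extension with maximal orders
`𝔬 = integralClosure ℤ₂ K` and `𝒪 = integralClosure ℤ₂ E` (ramified is encoded by the
triviality of the residue field extension), and `B ⊆ 𝔬` an additive subgroup of `K` with
`Tr^E_K(𝒪) ⊆ B`, `1 ∈ B` and `Nr^E_K(𝒪)·B ⊆ B`.  Then `𝔬 ⊆ B`. -/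
theorem dyadic_trace_norm_subgroup
    (K : Type*) [Field K] [Algebra ℚ_[2] K] [FiniteDimensional ℚ_[2] K]
    [Algebra ℤ_[2] K] [IsScalarTower ℤ_[2] ℚ_[2] K]
    (E : Type*) [Field E] [Algebra K E] [FiniteDimensional K E]
    [Algebra ℤ_[2] E] [IsScalarTower ℤ_[2] K E]
    (hquad : Module.finrank K E = 2)
    -- the extension `E/K` is ramified: the residue field extension is trivial
    (𝔪E : Ideal (integralClosure ℤ_[2] E)) (hmax : 𝔪E.IsMaximal)
    (hram : ∀ x : E, x ∈ integralClosure ℤ_[2] E →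
      ∃ a : K, a ∈ integralClosure ℤ_[2] K ∧
        ∃ m : integralClosure ℤ_[2] E, m ∈ 𝔪E ∧ (m : E) = x - algebraMap K E a)
    (B : AddSubgroup K)
    (hBsub : ∀ b ∈ B, b ∈ integralClosure ℤ_[2] K)
    (htr : ∀ x : E, x ∈ integralClosure ℤ_[2] E → Algebra.trace K E x ∈ B)
    (hone : (1 : K) ∈ B)
    (hnorm : ∀ x : E, x ∈ integralClosure ℤ_[2] E → ∀ b ∈ B, Algebra.norm K x * b ∈ B) :
    ∀ a : K, a ∈ integralClosure ℤ_[2] K → a ∈ B := by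
  let : Algebra ℚ_[2] E := ((algebraMap K E).comp (algebraMap ℚ_[2] K)).toAlgebra
  have : IsScalarTower ℚ_[2] K E := IsScalarTower.of_algebraMap_eq fun _ => rfl
  have : IsScalarTower ℤ_[2] ℚ_[2] E := IsScalarTower.of_algebraMap_eq fun z => by
    rw [IsScalarTower.algebraMap_apply ℤ_[2] K E, IsScalarTower.algebraMap_apply ℤ_[2] ℚ_[2] K,
      ← IsScalarTower.algebraMap_apply ℚ_[2] K E]
  have : FiniteDimensional ℚ_[2] E := FiniteDimensional.trans ℚ_[2] K E
  have : CharZero K := charZero_of_injective_algebraMap (algebraMap ℚ_[2] K).injective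
  have : IsDedekindDomain (integralClosure ℤ_[2] K) :=
    integralClosure.isDedekindDomain ℤ_[2] ℚ_[2] K
  have : IsDedekindDomain (integralClosure ℤ_[2] E) :=
    integralClosure.isDedekindDomain ℤ_[2] ℚ_[2] E
  have : Module.Finite ℤ_[2] (integralClosure ℤ_[2] K) :=
    IsIntegralClosure.finite ℤ_[2] ℚ_[2] K _
  have : Module.Finite ℤ_[2] (integralClosure ℤ_[2] E) :=
    IsIntegralClosure.finite ℤ_[2] ℚ_[2] E _
  have : IsFractionRing (integralClosure ℤ_[2] K) K :=
    integralClosure.isFractionRing_of_finite_extension ℚ_[2] K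
  have hmem : ∀ a : integralClosure ℤ_[2] K,
      algebraMap K E a ∈ (integralClosure ℤ_[2] E) := fun a =>
    a.2.map (IsScalarTower.toAlgHom ℤ_[2] K E)
  let φ : integralClosure ℤ_[2] K →+* integralClosure ℤ_[2] E :=
    ((algebraMap K E).comp (integralClosure ℤ_[2] K).val.toRingHom).codRestrict _ hmem
  let : Algebra (integralClosure ℤ_[2] K) (integralClosure ℤ_[2] E) := φ.toAlgebra
  have : IsScalarTower (integralClosure ℤ_[2] K) (integralClosure ℤ_[2] E) E :=
    IsScalarTower.of_algebraMap_eq fun _ => rfl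
  have : IsScalarTower ℤ_[2] (integralClosure ℤ_[2] K) (integralClosure ℤ_[2] E) :=
    IsScalarTower.of_algebraMap_eq fun z => Subtype.ext
      (IsScalarTower.algebraMap_apply ℤ_[2] K E z)
  have : Module.Finite (integralClosure ℤ_[2] K) (integralClosure ℤ_[2] E) :=
    Module.Finite.of_restrictScalars_finite ℤ_[2] _ _
  have hinj : Function.Injective φ := fun a b h =>
    Subtype.ext ((algebraMap K E).injective (congrArg Subtype.val h))
  have : Module.IsTorsionFree (integralClosure ℤ_[2] K) (integralClosure ℤ_[2] E) :=
    Module.isTorsionFree_iff_algebraMap_injective.2 hinj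
  have : IsScalarTower ℤ_[2] (integralClosure ℤ_[2] K) E :=
    IsScalarTower.of_algebraMap_eq fun z => IsScalarTower.algebraMap_apply ℤ_[2] K E z
  have : IsIntegralClosure (integralClosure ℤ_[2] E) (integralClosure ℤ_[2] K) E :=
    { algebraMap_injective := Subtype.val_injective
      isIntegral_iff := fun {x} => by
        constructor
        · intro h
          exact ⟨⟨x, isIntegral_trans (R := ℤ_[2]) x h⟩, rfl⟩
        · rintro ⟨y, rfl⟩
          exact IsIntegral.tower_top (R := ℤ_[2]) y.2 }
  have : IsPrincipalIdealRing (integralClosure ℤ_[2] E) := aux_fin ℤ_[2] _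
  obtain ⟨w, n, hn, hspan⟩ := aux_unif (integralClosure ℤ_[2] K) (integralClosure ℤ_[2] E) K E 𝔪E
    (fun x => by
      obtain ⟨a, ha, m, hm, h⟩ := hram x x.2
      refine ⟨⟨a, ha⟩, ?_⟩
      convert hm
      exact Subtype.ext h.symm)
  have hmaxK : (𝔪E.under (integralClosure ℤ_[2] K)).IsMaximal := inferInstance
  have hnm : n ∈ 𝔪E.under (integralClosure ℤ_[2] K) := by
    rw [hspan]; exact Ideal.mem_span_singleton_self n
  have hn' : (n : K) = Algebra.norm K (w : E) := hn
  have hsqmem : ∀ a : integralClosure ℤ_[2] K, (a : K) ^ 2 ∈ B := by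
    intro a
    have := hnorm _ (hmem a) 1 hone
    rwa [Algebra.norm_algebraMap, hquad, mul_one] at this
  have h2mem : ∀ a ∈ integralClosure ℤ_[2] K, 2 * a ∈ B := by
    intro a ha
    have := htr _ (hmem ⟨a, ha⟩)
    rwa [Algebra.trace_algebraMap, hquad, nsmul_eq_mul] at this
  have hstep : ∀ j : ℕ, ∀ x : integralClosure ℤ_[2] K, ∃ z : integralClosure ℤ_[2] K,
      (x : K) - (n : K) ^ j * z ∈ B := by
    intro j
    induction j with
    | zero => exact fun x => ⟨x, by simp [B.zero_mem]⟩
    | succ j ih =>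
      intro x
      obtain ⟨a, ha⟩ := aux_sq _ (𝔪E.under (integralClosure ℤ_[2] K)) x
      rw [hspan] at ha
      obtain ⟨y, hy⟩ := Ideal.mem_span_singleton'.1 ha
      obtain ⟨z, hz⟩ := ih y
      refine ⟨z, ?_⟩
      have h1 := B.add_mem (hsqmem a) (hnorm w w.2 _ hz)
      rw [← hn'] at h1
      have hy' : (y : K) * n = x - (a : K) ^ 2 := congrArg Subtype.val hy
      convert h1 using 1
      linear_combination -hy'
  have hninv : (n : K)⁻¹ ∉ integralClosure ℤ_[2] K := by
    intro h
    have hn0 : (n : K) ≠ 0 ∨ (n : K) = 0 := (em _).symm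
    refine hmaxK.ne_top ?_
    rcases hn0 with hn0 | hn0
    · refine Ideal.eq_top_of_isUnit_mem _ hnm (.of_mul_eq_one ⟨_, h⟩ ?_)
      exact Subtype.ext (mul_inv_cancel₀ hn0)
    · exfalso
      have hnz : n = 0 := Subtype.ext hn0
      have h2 : (2 : ℤ_[2]) ∈ (𝔪E.under (integralClosure ℤ_[2] K)).under ℤ_[2] := by
        rw [IsLocalRing.eq_maximalIdeal (I := Ideal.under ℤ_[2] _) inferInstance]
        exact PadicInt.p_nonunit
      have h' := Ideal.mem_comap.1 h2
      rw [map_ofNat, hspan, hnz, Ideal.mem_span_singleton, zero_dvd_iff] at h'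
      exact two_ne_zero (congrArg Subtype.val h' : (2 : K) = 0)
  obtain ⟨j, y, hy, hj⟩ := aux_pow K n n.2 hninv
  intro a ha
  obtain ⟨z, hz⟩ := hstep j ⟨a, ha⟩
  have h := B.add_mem hz (h2mem (y * z) (mul_mem hy z.2))
  convert h using 1
  rw [hj]
  ring
end

section
/- Let E/K be a ramified quadratic extension of non-archimedean local fields of characteristic 0, L a hermitian 𝒪-lattice with even trace form, scale 𝔰(L) = 𝔓^i, and 𝔇_{E/F} = 𝔓^a. Then every φ in the kernel U^♯(L) of U(L) → U(D_L) satisfies φ(x) - x ∈ h(x, L)·𝔓^a·L for all x ∈ L; in particular φ ≡ id mod 𝔓^{i+a}, so det(φ) ≡ 1 mod 𝔓^{i+a}. -/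
open scoped nonZeroDivisors

theorem aux_pid {A : Type*} [CommRing A] [IsDedekindDomain A] [IsLocalRing A] {O : Type*}
    [CommRing O] [IsDedekindDomain O] [Algebra A O] [Algebra.IsIntegral A O]
    (hinj : Function.Injective (algebraMap A O)) : IsPrincipalIdealRing O := by
  have : Module.IsTorsionFree A O := Module.isTorsionFree_iff_algebraMap_injective.mpr hinj
  apply IsPrincipalIdealRing.of_finite_maximals
  refine (IsDedekindDomain.primesOver_finite (IsLocalRing.maximalIdeal A) O).subset ?_
  intro P hP
  have hP' : P.IsMaximal := hP
  refine ⟨hP'.isPrime, ⟨?_⟩⟩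
  have : (P.under A).IsMaximal := inferInstance
  exact (IsLocalRing.eq_maximalIdeal this).symm

theorem aux_det {O E V : Type*} [CommRing O] [IsDomain O] [IsPrincipalIdealRing O] [Field E]
    [Algebra O E] [IsFractionRing O E] [AddCommGroup V] [Module O V] [Module E V]
    [IsScalarTower O E V] (M : Submodule O V) [Submodule.IsLattice E M]
    (φ : V →ₗ[E] V) (hφ : ∀ x ∈ M, φ x ∈ M) (J : Submodule O E)
    (hJ : ∀ x ∈ M, φ x - x ∈ AddSubgroup.closure {w : V | ∃ j ∈ J, ∃ z ∈ M, w = j • z}) :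
    LinearMap.det φ - 1 ∈ J := by
  classical
  have : Module.IsTorsionFree O E := inferInstance
  have hfree : Module.Free O M := Submodule.IsLattice.free E M
  let κ := Module.Free.ChooseBasisIndex O M
  let b : Module.Basis κ O M := Module.Free.chooseBasis O M
  let B : Module.Basis κ E V := b.extendOfIsLattice E
  have hB : ∀ k, B k = (b k : V) := fun k => b.extendOfIsLattice_apply E k
  have hrepr : ∀ (z : M) (k : κ), B.repr (z : V) k = algebraMap O E (b.repr z k) := by
    intro z k
    have h1 : (z : V) = ∑ i, algebraMap O E (b.repr z i) • B i := by
      have h0 := congrArg (fun m : M => (m : V)) (b.sum_repr z)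
      simp only [Submodule.coe_sum, Submodule.coe_smul] at h0
      rw [← h0]
      simp only [hB, algebraMap_smul]
    rw [h1, B.repr_sum_self]
  let ψ : M →ₗ[O] M := (φ.restrictScalars O).restrict hφ
  have hψ : ∀ x : M, (ψ x : V) = φ x := fun x => rfl
  let X : Matrix κ κ O := LinearMap.toMatrix b b ψ
  have hXa : ∀ i j, X i j = b.repr (ψ (b j)) i := fun i j => LinearMap.toMatrix_apply b b ψ i j
  have hX : LinearMap.toMatrix B B φ = X.map (algebraMap O E) := by
    ext i j
    rw [LinearMap.toMatrix_apply, Matrix.map_apply, hXa, hB, ← hψ, hrepr]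
  have hdet : LinearMap.det φ = algebraMap O E X.det := by
    rw [← LinearMap.det_toMatrix B, hX, RingHom.map_det]
    rfl
  let I : Ideal O := J.comap (Algebra.linearMap O E)
  have hI : ∀ i j, X i j - (1 : Matrix κ κ O) i j ∈ I := by
    intro i j
    change algebraMap O E _ ∈ J
    have h2 : algebraMap O E (X i j - (1 : Matrix κ κ O) i j)
        = B.repr (φ (b j) - b j) i := by
      rw [map_sub, map_sub, Finsupp.sub_apply, ← hψ, hrepr, hrepr, hXa]
      congr 2
      simp [Matrix.one_apply, Finsupp.single_apply, eq_comm]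
    rw [h2]
    have h3 := hJ (b j) (b j).2
    generalize φ (b j) - b j = w at h3
    induction h3 using AddSubgroup.closure_induction with
    | mem x hx =>
      obtain ⟨c, hc, z, hz, rfl⟩ := hx
      have := hrepr ⟨z, hz⟩ i
      simp only at this
      rw [map_smul, Finsupp.smul_apply, this, smul_eq_mul, mul_comm, ← Algebra.smul_def]
      exact J.smul_mem _ hc
    | zero => simp
    | add x y _ _ hx hy => rw [map_add]; exact J.add_mem hx hy
    | neg x _ hx => rw [map_neg]; exact J.neg_mem hx
  have hq : (Ideal.Quotient.mk I) X.det = 1 := by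
    rw [RingHom.map_det]
    have : (Ideal.Quotient.mk I).mapMatrix X = 1 := by
      rw [← map_one (Ideal.Quotient.mk I).mapMatrix]
      ext i j
      exact Ideal.Quotient.eq.mpr (hI i j)
    rw [this, Matrix.det_one]
  have : X.det - 1 ∈ I := by
    rw [← Ideal.Quotient.eq, hq, map_one]
  change algebraMap O E _ ∈ J at this
  rw [hdet]
  simpa using this

theorem aux_span {O E V : Type*} [CommRing O] [IsDedekindDomain O] [Field E]
    [Algebra O E] [IsFractionRing O E] [AddCommGroup V] [Module E V]
    (φ : V →ₗ[E] V) (x : V) (I D : FractionalIdeal O⁰ E) (hI : I ≠ 0) (hD : D ≠ 0)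
    (T : AddSubgroup V)
    (hT : ∀ a ∈ I, ∀ d ∈ D⁻¹, ∀ b : E, (∀ a' ∈ I, b * a' ∈ D) →
      (a * d) • (φ (b • x) - b • x) ∈ T) : φ x - x ∈ T := by
  have h1 : (1 : E) ∈ (I * D⁻¹) * (D * I⁻¹) := by
    have : (I * D⁻¹) * (D * I⁻¹) = 1 := by field_simp
    rw [this]
    exact FractionalIdeal.one_mem_one _
  suffices H : ∀ r ∈ (I * D⁻¹) * (D * I⁻¹), φ (r • x) - r • x ∈ T by simpa using H 1 h1
  have hadd : ∀ r s : E, φ (r • x) - r • x ∈ T → φ (s • x) - s • x ∈ T →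
      φ ((r + s) • x) - (r + s) • x ∈ T := by
    intro r s hr hs
    have := T.add_mem hr hs
    rw [add_smul, map_add]
    convert this using 1
    abel
  intro r hr
  refine FractionalIdeal.mul_induction_on (C := fun r => φ (r • x) - r • x ∈ T) hr ?_ hadd
  intro i hi b hb
  have hb' : ∀ a' ∈ I, b * a' ∈ D := by
    intro a' ha'
    have := FractionalIdeal.mul_mem_mul hb ha'
    rwa [mul_assoc, inv_mul_cancel₀ hI, mul_one] at this
  refine FractionalIdeal.mul_induction_on (C := fun i => φ ((i * b) • x) - (i * b) • x ∈ T) hi ?_ ?_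
  · intro a ha d hd
    have := hT a ha d hd b hb'
    rwa [smul_sub, ← map_smul, smul_smul] at this
  · intro u v hu hv
    rw [add_mul]
    exact hadd _ _ hu hv


/-- Let `E/K` be a ramified quadratic extension of non-archimedean local fields of
characteristic `0` (finite over `ℚ_p`), and `(L, h)` a hermitian `𝒪`-lattice with even
trace form, scale `𝔰(L) = 𝔓^i` and different `𝔇_{E/F} = 𝔓^a`.  Every `φ` in the kernel
`U^♯(L)` of `U(L) → U(D_L)` satisfies `φ(x) - x ∈ h(x,L)·𝔓^a·L` for all `x ∈ L`; in
particular `φ ≡ id mod 𝔓^{i+a}`, so `det(φ) ≡ 1 mod 𝔓^{i+a} = 𝔰(L)·𝔇_{E/F}`. -/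
theorem kernel_congruence
    (p : ℕ) [Fact p.Prime]
    (K : Type*) [Field K] [Algebra ℚ_[p] K] [FiniteDimensional ℚ_[p] K]
    [Algebra ℤ_[p] K] [IsScalarTower ℤ_[p] ℚ_[p] K]
    (E : Type*) [Field E] [Algebra K E] [Algebra ℚ_[p] E] [IsScalarTower ℚ_[p] K E]
    [Algebra ℤ_[p] E] [IsScalarTower ℤ_[p] K E] [Module.Finite K E]
    [Module.Finite ℚ_[p] E]
    (hquad : Module.finrank K E = 2)
    (ι : E ≃ₐ[K] E) (hinv : ∀ z, ι (ι z) = z)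
    (hfix : ∀ z : E, ι z = z → ∃ a : K, algebraMap K E a = z)
    -- `E/K` is ramified: the residue field extension is trivial
    (𝔪E : Ideal (integralClosure ℤ_[p] E)) (hmax : 𝔪E.IsMaximal)
    (hram : ∀ z : E, z ∈ integralClosure ℤ_[p] E →
      ∃ a : K, a ∈ integralClosure ℤ_[p] K ∧
        ∃ m : integralClosure ℤ_[p] E, m ∈ 𝔪E ∧ (m : E) = z - algebraMap K E a)
    (V : Type*) [AddCommGroup V] [Module E V] [Module.Free E V] [Module.Finite E V]
    (h : V → V → E)
    (hadd : ∀ x y z : V, h (x + y) z = h x z + h y z)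
    (hsmul : ∀ (e : E) (x y : V), h (e • x) y = e * h x y)
    (hconj : ∀ x y : V, h x y = ι (h y x))
    (hnd : ∀ x : V, (∀ y, h x y = 0) → x = 0)
    (L : AddSubgroup V)
    (hOL : ∀ c ∈ integralClosure ℤ_[p] E, ∀ x ∈ L, c • x ∈ L)
    (hfull : Submodule.span E (L : Set V) = ⊤)
    (hfg : ∃ s : Finset V, ↑s ⊆ (L : Set V) ∧ ∀ v ∈ L,
      v ∈ AddSubgroup.closure {w : V | ∃ c ∈ integralClosure ℤ_[p] E, ∃ y ∈ s, w = c • y})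
    -- the trace form on `L` is even, i.e. `𝔫(L) ⊆ 𝔇_{K/F}^{-1}`
    (heven : ∀ v ∈ L, ∃ a : K, algebraMap K E a = h v v ∧
      ∀ u ∈ integralClosure ℤ_[p] K,
        ∃ k : ℤ_[p], Algebra.trace ℚ_[p] K (a * u) = algebraMap ℤ_[p] ℚ_[p] k)
    (φ : V →ₗ[E] V)
    (hφh : ∀ x y, h (φ x) (φ y) = h x y)
    (hφL : ∀ v : V, v ∈ L ↔ φ v ∈ L)
    -- `φ ∈ U^♯(L)`, i.e. `(φ - id)(L^∨) ⊆ L`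
    (hφker : ∀ z : V, (∀ y ∈ L, ∃ c : ℤ_[p],
        Algebra.trace ℚ_[p] E (h z y) = algebraMap ℤ_[p] ℚ_[p] c) →
      φ z - z ∈ L) :
    (∀ x ∈ L, φ x - x ∈ AddSubgroup.closure {w : V |
        ∃ y ∈ L, ∃ d : E, (∀ e : E, (∀ c ∈ integralClosure ℤ_[p] E,
            ∃ k : ℤ_[p], Algebra.trace ℚ_[p] E (e * c) = algebraMap ℤ_[p] ℚ_[p] k) →
          d * e ∈ integralClosure ℤ_[p] E) ∧
        ∃ z ∈ L, w = (h x y * d) • z}) ∧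
      (∀ x ∈ L, φ x - x ∈ AddSubgroup.closure {w : V |
        ∃ y ∈ L, ∃ y' ∈ L, ∃ d : E, (∀ e : E, (∀ c ∈ integralClosure ℤ_[p] E,
            ∃ k : ℤ_[p], Algebra.trace ℚ_[p] E (e * c) = algebraMap ℤ_[p] ℚ_[p] k) →
          d * e ∈ integralClosure ℤ_[p] E) ∧
        ∃ z ∈ L, w = (h y y' * d) • z}) ∧
      LinearMap.det φ - 1 ∈ AddSubgroup.closure {e : E |
        ∃ y ∈ L, ∃ y' ∈ L, ∃ d : E, (∀ e' : E, (∀ c ∈ integralClosure ℤ_[p] E,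
            ∃ k : ℤ_[p], Algebra.trace ℚ_[p] E (e' * c) = algebraMap ℤ_[p] ℚ_[p] k) →
          d * e' ∈ integralClosure ℤ_[p] E) ∧
        ∃ c ∈ integralClosure ℤ_[p] E, e = h y y' * d * c} := by
  classical
  have tower : IsScalarTower ℤ_[p] ℚ_[p] E := by
    refine IsScalarTower.of_algebraMap_eq fun r => ?_
    rw [IsScalarTower.algebraMap_apply ℤ_[p] K E, IsScalarTower.algebraMap_apply ℤ_[p] ℚ_[p] K,
      ← IsScalarTower.algebraMap_apply ℚ_[p] K E]
  let O := integralClosure ℤ_[p] E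
  have hfr : IsFractionRing O E :=
    integralClosure.isFractionRing_of_finite_extension (A := ℤ_[p]) ℚ_[p] E
  have hded : IsDedekindDomain O := integralClosure.isDedekindDomain ℤ_[p] ℚ_[p] E
  have hpid : IsPrincipalIdealRing O := by
    refine aux_pid (A := ℤ_[p]) ?_
    intro a b hab
    have h1 : algebraMap ℤ_[p] E a = algebraMap ℤ_[p] E b := congrArg (fun z : O => (z : E)) hab
    rw [IsScalarTower.algebraMap_apply ℤ_[p] ℚ_[p] E, IsScalarTower.algebraMap_apply ℤ_[p] ℚ_[p] E] at h1
    exact IsFractionRing.injective ℤ_[p] ℚ_[p] ((algebraMap ℚ_[p] E).injective h1)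
  -- basic facts on `h`
  have hι : ∀ c ∈ O, ι c ∈ O := by
    intro c hc
    exact IsIntegral.map (ι.toAlgHom.restrictScalars ℤ_[p]) hc
  have hadd2 : ∀ x y z : V, h x (y + z) = h x y + h x z := by
    intro x y z
    rw [hconj, hadd, map_add, ← hconj, ← hconj]
  have hsmul2 : ∀ (e : E) (x y : V), h x (e • y) = ι e * h x y := by
    intro e x y
    rw [hconj, hsmul, map_mul, ← hconj]
  have hzero2 : ∀ x, h x 0 = 0 := by
    intro x
    have := hsmul2 0 x 0
    simpa using this
  have hneg2 : ∀ x y : V, h x (-y) = - h x y := by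
    intro x y
    have := hsmul2 (-1) x y
    simpa using this
  obtain ⟨s, hsL, hs⟩ := hfg
  -- the lattice as a submodule
  let M : Submodule O V :=
    { carrier := L
      add_mem' := L.add_mem
      zero_mem' := L.zero_mem
      smul_mem' := fun c x hx => hOL c c.2 x hx }
  have hMmem : ∀ x, x ∈ M ↔ x ∈ L := fun x => Iff.rfl
  have hMspan : M = Submodule.span O (s : Set V) := by
    apply le_antisymm
    · intro v hv
      have := hs v hv
      refine (AddSubgroup.closure_le (K := (Submodule.span O (s : Set V)).toAddSubgroup)).mpr ?_ this
      rintro w ⟨c, hc, y, hy, rfl⟩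
      exact Submodule.smul_mem _ (⟨c, hc⟩ : O) (Submodule.subset_span hy)
    · exact Submodule.span_le.mpr hsL
  have hlat : Submodule.IsLattice E M := ⟨⟨s, hMspan.symm⟩, hfull⟩
  -- the codifferent
  let C : FractionalIdeal O⁰ E := FractionalIdeal.dual ℤ_[p] ℚ_[p] 1
  have hC0 : C ≠ 0 := FractionalIdeal.dual_ne_zero ℤ_[p] ℚ_[p] one_ne_zero
  have hone : ∀ x : E, x ∈ (1 : FractionalIdeal O⁰ E) ↔ x ∈ O := by
    intro x
    rw [FractionalIdeal.mem_one_iff]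
    exact ⟨fun ⟨y, hy⟩ => hy ▸ y.2, fun hx => ⟨⟨x, hx⟩, rfl⟩⟩
  have hC : ∀ e : E, e ∈ C ↔ ∀ c ∈ O,
      ∃ k : ℤ_[p], Algebra.trace ℚ_[p] E (e * c) = algebraMap ℤ_[p] ℚ_[p] k := by
    intro e
    rw [FractionalIdeal.mem_dual (one_ne_zero (α := FractionalIdeal O⁰ E))]
    constructor
    · intro H c hc
      obtain ⟨k, hk⟩ := H c ((hone c).mpr hc)
      exact ⟨k, hk.symm⟩
    · intro H c hc
      obtain ⟨k, hk⟩ := H c ((hone c).mp hc)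
      exact ⟨k, hk.symm⟩
  have hCinv : ∀ d ∈ C⁻¹, ∀ e : E, (∀ c ∈ O,
      ∃ k : ℤ_[p], Algebra.trace ℚ_[p] E (e * c) = algebraMap ℤ_[p] ℚ_[p] k) → d * e ∈ O := by
    intro d hd e he
    exact (hone _).mp ((FractionalIdeal.mem_inv_iff hC0).mp hd e ((hC e).mpr he))
  have part1 : ∀ x ∈ L, φ x - x ∈ AddSubgroup.closure {w : V |
        ∃ y ∈ L, ∃ d : E, (∀ e : E, (∀ c ∈ integralClosure ℤ_[p] E,
            ∃ k : ℤ_[p], Algebra.trace ℚ_[p] E (e * c) = algebraMap ℤ_[p] ℚ_[p] k) →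
          d * e ∈ integralClosure ℤ_[p] E) ∧
        ∃ z ∈ L, w = (h x y * d) • z} := by
    intro x hx
    let I : FractionalIdeal O⁰ E := FractionalIdeal.spanFinset O s (h x)
    have hIL : ∀ y ∈ L, h x y ∈ I := by
      intro y hy
      have hy' := hs y hy
      clear hy
      induction hy' using AddSubgroup.closure_induction with
      | mem y hyy =>
        obtain ⟨c, hc, z, hz, rfl⟩ := hyy
        rw [hsmul2]
        have h1 : h x z ∈ (I : Submodule O E) := by
          rw [FractionalIdeal.spanFinset_coe]
          exact Submodule.subset_span ⟨z, hz, rfl⟩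
        exact (I : Submodule O E).smul_mem (⟨ι c, hι c hc⟩ : O) h1
      | zero => rw [hzero2]; exact (I : Submodule O E).zero_mem
      | add u v _ _ ihu ihv =>
        rw [hadd2]
        exact (I : Submodule O E).add_mem ihu ihv
      | neg u _ ihu =>
        rw [hneg2]
        exact (I : Submodule O E).neg_mem ihu
    have hI2 : ∀ a ∈ I, ∃ y ∈ L, a = h x y := by
      intro a ha
      have ha' : a ∈ (I : Submodule O E) := ha
      rw [FractionalIdeal.spanFinset_coe] at ha'
      clear ha
      induction ha' using Submodule.span_induction with
      | mem a ha =>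
        obtain ⟨y, hy, rfl⟩ := ha
        exact ⟨y, hsL hy, rfl⟩
      | zero => exact ⟨0, L.zero_mem, (hzero2 x).symm⟩
      | add a b ha hb iha ihb =>
        obtain ⟨y, hy, rfl⟩ := iha
        obtain ⟨z, hz, rfl⟩ := ihb
        exact ⟨y + z, L.add_mem hy hz, (hadd2 x y z).symm⟩
      | smul c a ha iha =>
        obtain ⟨y, hy, rfl⟩ := iha
        refine ⟨ι c • y, hOL _ (hι c c.2) y hy, ?_⟩
        rw [hsmul2, hinv]
        rfl
    by_cases hI0 : I = 0
    · have hx0 : x = 0 := by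
        apply hnd
        intro y
        have hy : y ∈ Submodule.span E (L : Set V) := by rw [hfull]; trivial
        induction hy using Submodule.span_induction with
        | mem y hy =>
          have := hIL y hy
          rw [hI0] at this
          exact (FractionalIdeal.mem_zero_iff _).mp this
        | zero => exact hzero2 x
        | add u v _ _ hu hv => rw [hadd2, hu, hv, add_zero]
        | smul c u _ hu => rw [hsmul2, hu, mul_zero]
      subst hx0
      rw [map_zero, sub_zero]
      exact zero_mem _
    · refine aux_span φ x I C hI0 hC0 _ ?_
      intro a ha d hd b hb
      obtain ⟨y, hy, rfl⟩ := hI2 a ha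
      apply AddSubgroup.subset_closure
      refine ⟨y, hy, d, hCinv d hd, _, ?_, rfl⟩
      apply hφker
      intro y' hy'
      have := (hC _).mp (hb _ (hIL y' hy')) 1 O.one_mem
      rwa [mul_one, ← hsmul] at this
  have part2 : ∀ x ∈ L, φ x - x ∈ AddSubgroup.closure {w : V |
        ∃ y ∈ L, ∃ y' ∈ L, ∃ d : E, (∀ e : E, (∀ c ∈ integralClosure ℤ_[p] E,
            ∃ k : ℤ_[p], Algebra.trace ℚ_[p] E (e * c) = algebraMap ℤ_[p] ℚ_[p] k) →
          d * e ∈ integralClosure ℤ_[p] E) ∧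
        ∃ z ∈ L, w = (h y y' * d) • z} := by
    intro x hx
    refine AddSubgroup.closure_mono ?_ (part1 x hx)
    rintro w ⟨y, hy, hw⟩
    exact ⟨x, hx, y, hy, hw⟩
  refine ⟨part1, part2, ?_⟩
  set S : Set E := {e : E |
        ∃ y ∈ L, ∃ y' ∈ L, ∃ d : E, (∀ e' : E, (∀ c ∈ integralClosure ℤ_[p] E,
            ∃ k : ℤ_[p], Algebra.trace ℚ_[p] E (e' * c) = algebraMap ℤ_[p] ℚ_[p] k) →
          d * e' ∈ integralClosure ℤ_[p] E) ∧
        ∃ c ∈ integralClosure ℤ_[p] E, e = h y y' * d * c} with hS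
  let J : Submodule O E :=
    { AddSubgroup.closure S with
      smul_mem' := by
        intro c x hx
        change x ∈ AddSubgroup.closure S at hx
        change c • x ∈ AddSubgroup.closure S
        induction hx using AddSubgroup.closure_induction with
        | mem x hx =>
          obtain ⟨y, hy, y', hy', d, hd, c', hc', rfl⟩ := hx
          apply AddSubgroup.subset_closure
          refine ⟨y, hy, y', hy', d, hd, c' * c, O.mul_mem hc' c.2, ?_⟩
          change (c : E) * _ = _
          ring
        | zero => rw [smul_zero]; exact zero_mem _
        | add x y _ _ hx hy => rw [smul_add]; exact add_mem hx hy
        | neg x _ hx => rw [smul_neg]; exact neg_mem hx }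
  change LinearMap.det φ - 1 ∈ J
  refine aux_det M φ (fun x hx => (hφL x).mp hx) J ?_
  intro x hx
  refine AddSubgroup.closure_mono ?_ (part2 x hx)
  rintro w ⟨y, hy, y', hy', d, hd, z, hz, rfl⟩
  refine ⟨h y y' * d, AddSubgroup.subset_closure ?_, z, hz, rfl⟩
  exact ⟨y, hy, y', hy', d, hd, 1, O.one_mem, (mul_one _).symm⟩
end
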